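/- Under the Hypothesis and assuming a 1-MCM solution exists (so P(G, 𝒰) is full-dimensional), for every v ∈ V the inequality Σ_{i∈M} x_v^i ≤ 1 defines a facet of P(G, 𝒰). -/

import Mathlib

open Finset
open scoped Classical

noncomputable section

/-- The neighbourhood `N_G(U') ⊆ V` of a set `U' ⊆ U` in the bipartite graph with
adjacency relation `E`. -/
def neigh {U V : Type*} [Fintype V] (E : U → V → Prop) (U' : Finset U) : Finset V :=
  Finset.filter (fun v : V => ∃ u ∈ U', E u v) Finset.univ

/-- The bipartite graph `G[Ui ∪ Vi]` is `k`-CM on `Ui`: for every `V'' ⊆ Vi` with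
`|V''| = |Vi| - k`, the induced subgraph has a matching covering `Ui`. -/
def kCMon {U V : Type*} [Fintype V] (E : U → V → Prop) (Ui : Finset U) (Vi : Finset V)
    (k : ℕ) : Prop :=
  ∀ V'' ⊆ Vi, V''.card + k = Vi.card →
    ∃ f : {u // u ∈ Ui} → V, Function.Injective f ∧ ∀ u, E u.1 (f u) ∧ f u ∈ V''

/-- `𝒱` is a partition of `V` into `m` (possibly empty) parts. -/
def IsPartitionOn {V : Type*} {m : ℕ} (𝒱 : Fin m → Finset V) : Prop :=
  (∀ v : V, ∃ i, v ∈ 𝒱 i) ∧ ∀ i j, i ≠ j → Disjoint (𝒱 i) (𝒱 j)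

/-- `(G, 𝒰, 𝒱)` is `k`-MCM: for every `i`, the graph `H_i = G[U_i ∪ V_i]` is `k`-CM
on `U_i`. -/
def MCM {U V : Type*} [Fintype V] {m : ℕ} (E : U → V → Prop) (𝒰 : Fin m → Finset U)
    (𝒱 : Fin m → Finset V) (k : ℕ) : Prop :=
  ∀ i, kCMon E (𝒰 i) (𝒱 i) k

/-- The set of integer points of the MBCMBP polytope `P(G,𝒰)`. -/
def mbSet {U V : Type*} [Fintype V] {m : ℕ} (E : U → V → Prop) (𝒰 : Fin m → Finset U) :
    Set ((V × Fin m → ℝ) × ℝ) :=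
  {p | (∀ q : V × Fin m, p.1 q = 0 ∨ p.1 q = 1) ∧ (∃ z : ℕ, p.2 = (z : ℝ)) ∧
    (∀ v : V, ∑ i : Fin m, p.1 (v, i) ≤ 1) ∧
    ∀ i : Fin m, ∀ U' ⊆ 𝒰 i, U'.Nonempty →
      (U'.card : ℝ) + p.2 ≤ ∑ v ∈ neigh E U', p.1 (v, i)}

/-- The linear form `p ↦ Σ_i p.1 (v,i)`. -/
def degForm (V : Type*) (m : ℕ) (v : V) : ((V × Fin m → ℝ) × ℝ) →ₗ[ℝ] ℝ where
  toFun p := ∑ i : Fin m, p.1 (v, i)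
  map_add' p q := by simp [Finset.sum_add_distrib]
  map_smul' c p := by simp [Finset.mul_sum]

theorem degForm_apply {V : Type*} {m : ℕ} (v : V) (p : (V × Fin m → ℝ) × ℝ) :
    degForm V m v p = ∑ i : Fin m, p.1 (v, i) := rfl

/-- The unit vector `e_{v,i}`. -/
def unitVec {V : Type*} {m : ℕ} (v : V) (i : Fin m) : (V × Fin m → ℝ) × ℝ :=
  (Pi.single (v, i) 1, 0)

theorem degForm_unitVec {V : Type*} {m : ℕ} (v : V) (i : Fin m) :
    degForm V m v (unitVec v i) = 1 := by
  simp [degForm_apply, unitVec, Pi.single_apply]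

/-- Adding an unassigned `v` to class `i` keeps feasibility. -/
theorem add_unitVec_mem {U V : Type*} [Fintype V] {m : ℕ} (E : U → V → Prop)
    (𝒰 : Fin m → Finset U) (v : V) (i : Fin m) (p : (V × Fin m → ℝ) × ℝ)
    (hp : p ∈ mbSet E 𝒰) (h0 : ∀ j, p.1 (v, j) = 0) : p + unitVec v i ∈ mbSet E 𝒰 := by
  obtain ⟨h01, ⟨z, hz⟩, hle, hH⟩ := hp
  refine ⟨?_, ⟨z, by simp [unitVec, hz]⟩, ?_, ?_⟩
  · rintro ⟨w, j⟩
    by_cases h : (w, j) = (v, i)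
    · right
      rw [h]
      simp [unitVec, h0]
    · simpa [unitVec, Pi.single_apply, h] using h01 (w, j)
  · intro w
    by_cases h : w = v
    · subst h
      simp [unitVec, Pi.single_apply, h0]
    · simpa [unitVec, Pi.single_apply, h] using hle w
  · intro j U' hU' hne
    have h := hH j U' hU' hne
    refine le_trans (by simpa [unitVec] using h) (Finset.sum_le_sum (fun w _ => ?_))
    have : (0 : ℝ) ≤ (Pi.single (v, i) (1 : ℝ) : V × Fin m → ℝ) (w, j) := by
      rw [Pi.single_apply]; split_ifs <;> norm_num
    simpa [unitVec] using this

/-- In an integer point, `v` is either unassigned or assigned exactly once. -/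
theorem zero_or_one {U V : Type*} [Fintype V] {m : ℕ} (E : U → V → Prop)
    (𝒰 : Fin m → Finset U) (v : V) (p : (V × Fin m → ℝ) × ℝ)
    (hp : p ∈ mbSet E 𝒰) : (∀ j, p.1 (v, j) = 0) ∨ degForm V m v p = 1 := by
  by_cases h : ∀ j, p.1 (v, j) = 0
  · exact Or.inl h
  · right
    push Not at h
    obtain ⟨j, hj⟩ := h
    refine le_antisymm (hp.2.2.1 v) ?_
    have h1 : p.1 (v, j) = 1 := (hp.1 (v, j)).resolve_left hj
    rw [degForm_apply, ← h1]
    refine Finset.single_le_sum (f := fun i => p.1 (v, i)) (fun i _ => ?_) (Finset.mem_univ j)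
    rcases hp.1 (v, i) with h | h <;> simp [h]

/-- A complete matching avoiding `v` gives an integer point with `v` unassigned. -/
theorem exists_avoiding {U V : Type*} [Fintype V] {m : ℕ} (E : U → V → Prop)
    (𝒰 : Fin m → Finset U) (hd : ∀ i j, i ≠ j → Disjoint (𝒰 i) (𝒰 j)) (v : V)
    (f : U → V) (hf : Function.Injective f) (hE : ∀ u, E u (f u) ∧ f u ≠ v) :
    ∃ p ∈ mbSet E 𝒰, ∀ j, p.1 (v, j) = 0 := by
  refine ⟨(fun q => if ∃ u ∈ 𝒰 q.2, f u = q.1 then 1 else 0, 0), ⟨?_, ⟨0, by simp⟩, ?_, ?_⟩, ?_⟩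
  · intro q
    dsimp only
    split_ifs <;> simp
  · intro w
    dsimp only
    rw [Finset.sum_boole]
    have : (Finset.univ.filter (fun i => ∃ u ∈ 𝒰 i, f u = w)).card ≤ 1 := by
      rw [Finset.card_le_one]
      intro i hi j hj
      simp only [Finset.mem_filter, Finset.mem_univ, true_and] at hi hj
      obtain ⟨a, ha, haw⟩ := hi
      obtain ⟨b, hb, hbw⟩ := hj
      have hab : a = b := hf (haw.trans hbw.symm)
      subst hab
      by_contra hij
      exact Finset.disjoint_left.1 (hd i j hij) ha hb
    exact_mod_cast this
  · intro i U' hU' _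
    dsimp only
    rw [Finset.sum_boole, add_zero, ← Finset.card_image_of_injective U' hf]
    norm_cast
    refine Finset.card_le_card ?_
    intro w hw
    obtain ⟨u, hu, rfl⟩ := Finset.mem_image.1 hw
    simp only [neigh, Finset.mem_filter, Finset.mem_univ, true_and]
    exact ⟨⟨u, hu, (hE u).1⟩, u, hU' hu, rfl⟩
  · intro j
    dsimp only
    rw [if_neg]
    rintro ⟨u, _, hu⟩
    exact (hE u).2 hu

/-- **Proposition 1.2.4**: under the hypothesis and assuming a `1`-MCM solution exists
(so `P(G,𝒰)` is full dimensional), for every `v ∈ V` the inequality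
`Σ_{i∈M} x_v^i ≤ 1` defines a facet of `P(G,𝒰)`: it is valid, and the set of points of
the polytope satisfying it with equality has affine span of dimension `dim P(G,𝒰) - 1`. -/
theorem stmt_3 {U V : Type*} [Fintype U] [Fintype V] {m : ℕ}
    (E : U → V → Prop) (𝒰 : Fin m → Finset U)
    (h𝒰 : (∀ u : U, ∃ i, u ∈ 𝒰 i) ∧ ∀ i j, i ≠ j → Disjoint (𝒰 i) (𝒰 j))
    (hyp : ∀ v : V, ∃ f : U → V, Function.Injective f ∧ ∀ u : U, E u (f u) ∧ f u ≠ v)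
    (h1 : ∃ 𝒱 : Fin m → Finset V, IsPartitionOn 𝒱 ∧ MCM E 𝒰 𝒱 1)
    (v : V) :
    (∀ p ∈ convexHull ℝ (mbSet E 𝒰), ∑ i : Fin m, p.1 (v, i) ≤ 1) ∧
    Module.finrank ℝ
        (affineSpan ℝ
          {p ∈ convexHull ℝ (mbSet E 𝒰) | ∑ i : Fin m, p.1 (v, i) = 1}).direction + 1 =
      Module.finrank ℝ (affineSpan ℝ (convexHull ℝ (mbSet E 𝒰))).direction := by
  obtain ⟨𝒱, ⟨hcov, -⟩, -⟩ := h1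
  obtain ⟨i, -⟩ := hcov v
  have hval : ∀ p ∈ convexHull ℝ (mbSet E 𝒰), ∑ i : Fin m, p.1 (v, i) ≤ 1 := by
    intro p hp
    have hc : Convex ℝ {p : (V × Fin m → ℝ) × ℝ | degForm V m v p ≤ 1} :=
      convex_halfSpace_le (degForm V m v).isLinear 1
    exact convexHull_min (fun q hq => hq.2.2.1 v) hc hp
  refine ⟨hval, ?_⟩
  rw [affineSpan_convexHull, direction_affineSpan, direction_affineSpan]
  set F : Set ((V × Fin m → ℝ) × ℝ) :=
    {p ∈ convexHull ℝ (mbSet E 𝒰) | ∑ i : Fin m, p.1 (v, i) = 1} with hF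
  set D := vectorSpan ℝ (mbSet E 𝒰) with hD
  set L := degForm V m v with hL
  obtain ⟨f, hf, hE⟩ := hyp v
  obtain ⟨p₀, hp₀, hz₀⟩ := exists_avoiding E 𝒰 h𝒰.2 v f hf hE
  have heD : unitVec v i ∈ D := by
    have := vsub_mem_vectorSpan ℝ (add_unitVec_mem E 𝒰 v i p₀ hp₀ hz₀) hp₀
    simpa using this
  have hFD : vectorSpan ℝ F ≤ D := by
    have h : vectorSpan ℝ F ≤ vectorSpan ℝ (convexHull ℝ (mbSet E 𝒰)) :=
      vectorSpan_mono ℝ (fun p hp => hp.1)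
    rwa [← direction_affineSpan ℝ (convexHull ℝ _), affineSpan_convexHull,
      direction_affineSpan] at h
  have hFL : vectorSpan ℝ F ≤ LinearMap.ker L := by
    rw [vectorSpan_def, Submodule.span_le]
    rintro _ ⟨p, hp, q, hq, rfl⟩
    have h1 : L p = 1 := hp.2
    have h2 : L q = 1 := hq.2
    simp [h1, h2]
  have hcompl : ∀ p ∈ mbSet E 𝒰, ∃ p' ∈ F, p - p' ∈ Submodule.span ℝ {unitVec v i} := by
    intro p hp
    rcases zero_or_one E 𝒰 v p hp with h | h
    · refine ⟨p + unitVec v i,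
        ⟨subset_convexHull ℝ _ (add_unitVec_mem E 𝒰 v i p hp h), ?_⟩, ?_⟩
      · have hLp : L p = 0 := by simp [hL, degForm_apply, h]
        change L (p + unitVec v i) = 1
        rw [map_add, hLp, hL, degForm_unitVec, zero_add]
      · have : p - (p + unitVec v i) = -unitVec v i := by abel
        rw [this]
        exact Submodule.neg_mem _ (Submodule.mem_span_singleton_self _)
    · exact ⟨p, ⟨subset_convexHull ℝ _ hp, h⟩, by simp⟩
  have hDle : D ≤ vectorSpan ℝ F ⊔ Submodule.span ℝ {unitVec v i} := by
    rw [hD, vectorSpan_def, Submodule.span_le]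
    rintro _ ⟨p, hp, q, hq, rfl⟩
    obtain ⟨p', hp', h1⟩ := hcompl p hp
    obtain ⟨q', hq', h2⟩ := hcompl q hq
    have h3 : p' - q' ∈ vectorSpan ℝ F := vsub_mem_vectorSpan ℝ hp' hq'
    have : p -ᵥ q = (p' - q') + ((p - p') - (q - q')) := by
      rw [vsub_eq_sub]; abel
    change p -ᵥ q ∈ _
    rw [this]
    exact Submodule.add_mem_sup h3 (Submodule.sub_mem _ h1 h2)
  have hker : vectorSpan ℝ F = (LinearMap.ker (L.domRestrict D)).map D.subtype := by
    apply le_antisymm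
    · intro x hx
      exact ⟨⟨x, hFD hx⟩, hFL hx, rfl⟩
    · rintro _ ⟨⟨x, hxD⟩, hx, rfl⟩
      have hx0 : L x = 0 := hx
      obtain ⟨y, hy, w, hw, hyw⟩ := Submodule.mem_sup.1 (hDle hxD)
      obtain ⟨c, rfl⟩ := Submodule.mem_span_singleton.1 hw
      have hLy : L y = 0 := hFL hy
      have hc : c = 0 := by
        rw [← hyw, map_add, hLy, map_smul, hL, degForm_unitVec] at hx0
        simpa using hx0
      subst hc
      simp only [zero_smul, add_zero] at hyw
      subst hyw
      exact hy
  have hne : L.domRestrict D ≠ 0 := by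
    intro h
    have := LinearMap.congr_fun h ⟨unitVec v i, heD⟩
    rw [LinearMap.domRestrict_apply] at this
    simp [hL, degForm_unitVec] at this
  rw [hker, Submodule.finrank_map_subtype_eq]
  exact Module.Dual.finrank_ker_add_one_of_ne_zero hne

end
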